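/- Reduction of entailment to model checking: let KB be an objective formula in conjunctive normal form whose conjuncts are the clauses c₁,…,c_j, let s = {c₁,…,c_j}, let α be an objective formula and k ≥ 0. Then the formula B₀ KB → B_k α is valid (i.e., s' ⊨ˢ (B₀ KB → B_k α) for every set of clauses s') if and only if s ⊨ˢ B_k α. -/

import Mathlib

/-! ## Limited belief: basic syntax and semantics (Schwering 2017, quantifier-free). -/

/-- Standard names (a countably infinite supply). -/
abbrev Name := ℕ

/-- Function terms `f(n₁,…,n_j)`: a function symbol applied to standard names. -/
structure FnTerm where
  sym : ℕ
  args : List Name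
deriving DecidableEq, Inhabited

/-- Literals `t ≈ n` (pos) and `t ≉ n` (neg). -/
inductive Lit where
  | pos (t : FnTerm) (n : Name)
  | neg (t : FnTerm) (n : Name)
deriving DecidableEq

instance : Inhabited Lit := ⟨.pos default 0⟩

/-- The left-hand side (function term) of a literal. -/
def Lit.lhs : Lit → FnTerm
  | .pos t _ => t
  | .neg t _ => t

/-- The right-hand side (standard name) of a literal. -/
def Lit.rhs : Lit → Name
  | .pos _ n => n
  | .neg _ n => n

/-- The negation `¬ℓ` of a literal. -/
def Lit.negate : Lit → Lit
  | .pos t n => .neg t n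
  | .neg t n => .pos t n

/-- Names occurring in a literal. -/
def Lit.names (ℓ : Lit) : Finset Name := insert ℓ.rhs ℓ.lhs.args.toFinset

/-- Two literals are complementary iff they are of the form `t ≈ n` and `t ≉ n`,
or of the form `t ≈ n` and `t ≈ n'` for distinct `n, n'`. -/
def Lit.complementary : Lit → Lit → Bool
  | .pos t n, .neg t' n' => t == t' && n == n'
  | .neg t n, .pos t' n' => t == t' && n == n'
  | .pos t n, .pos t' n' => t == t' && n != n'
  | .neg _ _, .neg _ _ => false

/-- A clause is a (finite) set of literals. -/
abbrev Clause := Finset Lit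

/-- Unit propagation of clause `c` with literal `ℓ`: remove from `c` all
literals complementary to `ℓ`. -/
def Clause.prop (c : Clause) (ℓ : Lit) : Clause :=
  c.filter (fun ℓ' => Lit.complementary ℓ' ℓ = false)

/-- `c₁` subsumes `c₂` iff for every `t ≈ n ∈ c₁`, `t ≈ n ∈ c₂` or `t ≉ n' ∈ c₂`
for some `n' ≠ n`, and for every `t ≉ n ∈ c₁`, `t ≉ n ∈ c₂`. -/
def Clause.subsumes (c₁ c₂ : Clause) : Prop :=
  (∀ t n, Lit.pos t n ∈ c₁ → Lit.pos t n ∈ c₂ ∨ ∃ n', n' ≠ n ∧ Lit.neg t n' ∈ c₂) ∧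
  (∀ t n, Lit.neg t n ∈ c₁ → Lit.neg t n ∈ c₂)

/-- `UP s`: the closure of the set of clauses `s` under unit propagation and
subsumption.  `UP s c` means `c ∈ UP(s)`. -/
inductive UP (s : Set Clause) : Clause → Prop
  | mem {c : Clause} : c ∈ s → UP s c
  | unit {c : Clause} {ℓ : Lit} : UP s {ℓ} → UP s c → UP s (c.prop ℓ)
  | sub {c₁ c₂ : Clause} : UP s c₁ → c₁.subsumes c₂ → UP s c₂

/-- Objective formulas: literals (`atom` is `t ≈ n`, `not atom` is `t ≉ n`),
negation and disjunction. -/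
inductive Form where
  | atom (t : FnTerm) (n : Name)
  | not (φ : Form)
  | or (φ ψ : Form)
deriving DecidableEq

/-- `α ∧ β` abbreviates `¬(¬α ∨ ¬β)`. -/
def Form.and (φ ψ : Form) : Form := .not (.or (.not φ) (.not ψ))

/-- `α → β` abbreviates `¬α ∨ β`. -/
def Form.imp (φ ψ : Form) : Form := .or (.not φ) ψ

/-- A formula is (syntactically) a clause iff it is a disjunction of literals. -/
def Form.isClause : Form → Bool
  | .atom _ _ => true
  | .not (.atom _ _) => true
  | .not _ => false
  | .or φ ψ => φ.isClause && ψ.isClause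

/-- The set of literals of a clause-formula. -/
def Form.lits : Form → Clause
  | .atom t n => {Lit.pos t n}
  | .not (.atom t n) => {Lit.neg t n}
  | .not _ => ∅
  | .or φ ψ => φ.lits ∪ ψ.lits

/-- The limited-belief truth relation `s ⊨ˢ α` for objective formulas:
a clause is true iff it is in `UP(s)`; a non-clause disjunction is true iff one
of its disjuncts is; `¬(α ∨ β)` is true iff `¬α` and `¬β` are; `¬¬α` is true
iff `α` is. -/
def sat (s : Set Clause) : Form → Prop
  | .atom t n => UP s {Lit.pos t n}
  | .not (.atom t n) => UP s {Lit.neg t n}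
  | .not (.not φ) => sat s φ
  | .not (.or φ ψ) => sat s (.not φ) ∧ sat s (.not ψ)
  | .or φ ψ => if (Form.or φ ψ).isClause then UP s (Form.or φ ψ).lits
               else sat s φ ∨ sat s ψ

/-- `satB s k α` is `s ⊨ˢ B_k α`: `B₀ α` holds iff `α` does, and `B_{k+1} α`
holds iff for some function term `t`, for all names `n`,
`s ∪ {t ≈ n} ⊨ˢ B_k α`. -/
def satB (s : Set Clause) : ℕ → Form → Prop
  | 0, φ => sat s φ
  | k+1, φ => ∃ t : FnTerm, ∀ n : Name, satB (s ∪ {({Lit.pos t n} : Clause)}) k φ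

/-- A world maps function terms to standard names. -/
abbrev World := FnTerm → Name

/-- Classical truth of a literal in a world. -/
def Lit.holds (w : World) : Lit → Prop
  | .pos t n => w t = n
  | .neg t n => w t ≠ n

/-- Classical truth of a clause in a world. -/
def Clause.holds (w : World) (c : Clause) : Prop := ∃ ℓ ∈ c, ℓ.holds w

/-- Classical truth of an objective formula in a world. -/
def wsat (w : World) : Form → Prop
  | .atom t n => w t = n
  | .not φ => ¬ wsat w φ
  | .or φ ψ => wsat w φ ∨ wsat w ψ

/-- Classical entailment `s ⊨ α`. -/
def entails (s : Set Clause) (φ : Form) : Prop :=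
  ∀ w : World, (∀ c ∈ s, c.holds w) → wsat w φ

/-- Classical entailment of a clause (disjunction of its literals). -/
def entailsClause (s : Set Clause) (c : Clause) : Prop :=
  ∀ w : World, (∀ c' ∈ s, c'.holds w) → c.holds w

/-- Function terms mentioned in a formula. -/
def Form.terms : Form → Finset FnTerm
  | .atom t _ => {t}
  | .not φ => φ.terms
  | .or φ ψ => φ.terms ∪ ψ.terms

/-- Standard names mentioned in a formula. -/
def Form.names : Form → Finset Name
  | .atom t n => insert n t.args.toFinset
  | .not φ => φ.names
  | .or φ ψ => φ.names ∪ ψ.names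
/-- CNF formulas: clauses, or conjunctions of CNF formulas. -/
inductive IsCNF : Form → Prop
  | clause {φ : Form} : φ.isClause = true → IsCNF φ
  | and {φ ψ : Form} : IsCNF φ → IsCNF ψ → IsCNF (Form.and φ ψ)

/-- The set of clauses of a CNF formula. -/
def Form.cnfClauses : Form → Set Clause
  | .not (.or (.not φ) (.not ψ)) => φ.cnfClauses ∪ ψ.cnfClauses
  | φ => if φ.isClause then {φ.lits} else ∅

/-- The formula corresponding to a literal. -/
def Lit.toForm : Lit → Form
  | .pos t n => .atom t n
  | .neg t n => .not (.atom t n)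

/-- `⋁_{ℓ ∈ ls} ℓ ∨ base`. -/
def Form.bigOrLits (ls : List Lit) (base : Form) : Form :=
  ls.foldr (fun ℓ acc => Form.or ℓ.toForm acc) base

/-- The disjunction of a nonempty list of literals (junk on the empty list). -/
def Form.bigOr : List Lit → Form
  | [] => Form.atom default 0
  | [ℓ] => ℓ.toForm
  | ℓ :: ℓ' :: ls => Form.or ℓ.toForm (Form.bigOr (ℓ' :: ls))

/-- The split-early gadget `s_k`: the least set including `s` that, for every
`ℓ ∈ L`, contains the clauses `¬ℓ ∨ c^ord`, `ℓ ∨ ℓʷ₁ ∨ … ∨ ℓʷ_{k-1} ∨ c^ord`,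
and `ℓ ∨ ¬ℓʷ_i ∨ c^ord` for each `i`, where `c^ord = ℓᵒ₁ ∨ … ∨ ℓᵒ_k`. -/
def gadget (s : Set Clause) (L : List Lit) (lws los : List Lit) : Set Clause :=
  s ∪ {c | ∃ ℓ ∈ L,
        c = insert ℓ.negate los.toFinset ∨
        c = insert ℓ (lws.toFinset ∪ los.toFinset) ∨
        ∃ ℓw ∈ lws, c = insert ℓ (insert ℓw.negate los.toFinset)}

theorem UP.mono_of {s s' : Set Clause} (h : ∀ c ∈ s, UP s' c) {c : Clause}
    (hc : UP s c) : UP s' c := by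
  induction hc with
  | mem hm => exact h _ hm
  | unit _ _ ih1 ih2 => exact UP.unit ih1 ih2
  | sub _ hsub ih => exact UP.sub ih hsub

theorem sat_mono_of {s s' : Set Clause} (h : ∀ c ∈ s, UP s' c) (φ : Form) :
    sat s φ → sat s' φ := by
  fun_induction sat s φ with
  | case1 t n => intro hs; rw [sat]; exact UP.mono_of h hs
  | case2 t n => intro hs; rw [sat]; exact UP.mono_of h hs
  | case3 φ ih => intro hs; rw [sat]; exact ih hs
  | case4 φ ψ ih1 ih2 => intro hs; rw [sat]; exact ⟨ih1 hs.1, ih2 hs.2⟩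
  | case5 φ ψ hcl => intro hs; rw [sat, if_pos hcl]; exact UP.mono_of h hs
  | case6 φ ψ hcl ih1 ih2 => intro hs; rw [sat, if_neg hcl]; exact hs.imp ih1 ih2

theorem satB_mono_of (k : ℕ) (φ : Form) : ∀ {s s' : Set Clause},
    (∀ c ∈ s, UP s' c) → satB s k φ → satB s' k φ := by
  induction k with
  | zero => intro s s' h hs; exact sat_mono_of h φ hs
  | succ k ih =>
    intro s s' h hs
    obtain ⟨t, ht⟩ := hs
    refine ⟨t, fun n => ih ?_ (ht n)⟩
    rintro c (hc | hc)
    · exact UP.mono_of (fun c hc => UP.mem (Or.inl hc)) (h c hc)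
    · exact UP.mem (Or.inr hc)

theorem sat_clause (s : Set Clause) (φ : Form) (h : φ.isClause = true) :
    sat s φ ↔ UP s φ.lits := by
  match φ, h with
  | .atom t n, _ => simp [sat, Form.lits]
  | .not (.atom t n), _ => simp [sat, Form.lits]
  | .or φ ψ, h => rw [sat, if_pos h]

theorem cnfClauses_clause (φ : Form) (h : φ.isClause = true) :
    φ.cnfClauses = {φ.lits} := by
  match φ, h with
  | .atom t n, h => simp [Form.cnfClauses, h]
  | .not (.atom t n), h => simp [Form.cnfClauses, h]
  | .or φ ψ, h => simp [Form.cnfClauses, h]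

theorem sat_cnf (s : Set Clause) (φ : Form) (h : IsCNF φ) :
    sat s φ ↔ ∀ c ∈ φ.cnfClauses, UP s c := by
  induction h with
  | clause h => rw [sat_clause s _ h, cnfClauses_clause _ h]; simp
  | and _ _ ih1 ih2 =>
    rw [Form.and, sat, sat, sat, ih1, ih2, Form.cnfClauses]
    simp only [Set.mem_union, or_imp, forall_and]

/-- **Reduction of entailment to model checking** (Lemma 4): for `KB` in CNF
with set of clauses `s`, the formula `B₀ KB → B_k α` is valid (i.e., for every
set of clauses `s'`, if `s' ⊨ˢ B₀ KB` then `s' ⊨ˢ B_k α`) iff `s ⊨ˢ B_k α`. -/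
theorem entailment_to_model_checking (KB : Form) (hKB : IsCNF KB)
    (s : Set Clause) (hs : s = KB.cnfClauses) (α : Form) (k : ℕ) :
    (∀ s' : Set Clause, satB s' 0 KB → satB s' k α) ↔ satB s k α := by
  subst hs
  constructor
  · intro h
    exact h _ ((sat_cnf _ KB hKB).2 (fun c hc => UP.mem hc))
  · intro h s' hs'
    exact satB_mono_of k α ((sat_cnf s' KB hKB).1 hs') h
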